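/- arXiv:0711.1135 — 7 statements merged into one kernel-verified Lean document; each statement's English description precedes it below -/
import Mathlib

section
/- Let V be a representation of a quiver Q over a field K, let Q^op be the opposite quiver (same vertices, all arrows reversed), and let DV be the representation of Q^op with (DV)_x = V_x^* and (DV)_a = V_a^* (the transpose map). Then for every vertex x, the maximal epimorphic subrepresentation of DV satisfies Γ_{Q^op}(DV)_x = { f ∈ V_x^* : f vanishes on Δ_Q(V)_x }, the annihilator of the minimal coclosed subrepresentation Δ_Q(V) at x. -/
open Submodule

section Defs

variable {K : Type} [Field K]
variable {Q₀ Q₁ : Type} (tl hd : Q₁ → Q₀)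
variable (Vx : Q₀ → Type) [∀ x, AddCommGroup (Vx x)] [∀ x, Module K (Vx x)]
variable (Va : ∀ a : Q₁, Vx (tl a) →ₗ[K] Vx (hd a))

/-- `U` is a subrepresentation of the representation `(Vx, Va)`. -/
def IsSubrep (U : ∀ x, Submodule K (Vx x)) : Prop :=
  ∀ a : Q₁, (U (tl a)).map (Va a) ≤ U (hd a)

/-- `U` is an epimorphic subrepresentation: `V_a(U_{ta}) = U_{ha}` for every arrow. -/
def IsEpiSub (U : ∀ x, Submodule K (Vx x)) : Prop :=
  ∀ a : Q₁, (U (tl a)).map (Va a) = U (hd a)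

/-- `N` is a coclosed subrepresentation: it is a subrepresentation and
`V_a⁻¹(N_{ha}) ⊆ N_{ta}` for every arrow. -/
def IsCoclosedSub (N : ∀ x, Submodule K (Vx x)) : Prop :=
  IsSubrep tl hd Vx Va N ∧ ∀ a : Q₁, (N (hd a)).comap (Va a) ≤ N (tl a)

/-- `Γ(V)`, the sum of all epimorphic subrepresentations. -/
def Gamma (x : Q₀) : Submodule K (Vx x) :=
  ⨆ U : {U : ∀ y, Submodule K (Vx y) // IsEpiSub tl hd Vx Va U}, U.1 x

/-- `Δ(V)`, the intersection of all coclosed subrepresentations. -/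
def Delta (x : Q₀) : Submodule K (Vx x) :=
  ⨅ N : {N : ∀ y, Submodule K (Vx y) // IsCoclosedSub tl hd Vx Va N}, N.1 x

lemma le_gamma {U : ∀ y, Submodule K (Vx y)} (hU : IsEpiSub tl hd Vx Va U) (x : Q₀) :
    U x ≤ Gamma tl hd Vx Va x :=
  le_iSup (fun (W : {U // IsEpiSub tl hd Vx Va U}) => W.1 x) ⟨U, hU⟩

lemma delta_le {N : ∀ y, Submodule K (Vx y)} (hN : IsCoclosedSub tl hd Vx Va N) (x : Q₀) :
    Delta tl hd Vx Va x ≤ N x :=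
  iInf_le (fun (W : {N // IsCoclosedSub tl hd Vx Va N}) => W.1 x) ⟨N, hN⟩

lemma gamma_epi : IsEpiSub tl hd Vx Va (Gamma tl hd Vx Va) := by
  intro a
  apply le_antisymm
  · rw [Gamma, Submodule.map_iSup]
    refine iSup_le fun U => ?_
    rw [U.2 a]
    exact le_gamma tl hd Vx Va U.2 (hd a)
  · refine iSup_le fun U => ?_
    rw [← U.2 a]
    exact Submodule.map_mono (le_gamma tl hd Vx Va U.2 (tl a))

lemma gamma_subrep : IsSubrep tl hd Vx Va (Gamma tl hd Vx Va) :=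
  fun a => le_of_eq (gamma_epi tl hd Vx Va a)

lemma delta_subrep : IsSubrep tl hd Vx Va (Delta tl hd Vx Va) := by
  intro a
  have : ∀ N : {N // IsCoclosedSub tl hd Vx Va N},
      (Delta tl hd Vx Va (tl a)).map (Va a) ≤ N.1 (hd a) :=
    fun N => le_trans (Submodule.map_mono (delta_le tl hd Vx Va N.2 (tl a))) (N.2.1 a)
  exact le_iInf this

/-- `Γ(V) + Δ(V)` pointwise. -/
abbrev GD (x : Q₀) : Submodule K (Vx x) := Gamma tl hd Vx Va x ⊔ Delta tl hd Vx Va x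

/-- `Δ(V)`, seen inside `Γ(V) + Δ(V)`. -/
abbrev rkfDen (x : Q₀) : Submodule K (GD tl hd Vx Va x) :=
  (Delta tl hd Vx Va x).comap (GD tl hd Vx Va x).subtype

/-- The vertex spaces `(Γ(V)_x + Δ(V)_x)/Δ(V)_x` of the global tensor functor. -/
abbrev rkfSpace (x : Q₀) : Type :=
  GD tl hd Vx Va x ⧸ rkfDen tl hd Vx Va x

lemma gd_mapsTo (a : Q₁) : ∀ v ∈ GD tl hd Vx Va (tl a), Va a v ∈ GD tl hd Vx Va (hd a) := by
  intro v hv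
  have : (GD tl hd Vx Va (tl a)).map (Va a) ≤ GD tl hd Vx Va (hd a) := by
    rw [Submodule.map_sup]
    exact sup_le_sup (gamma_subrep tl hd Vx Va a) (delta_subrep tl hd Vx Va a)
  exact this ⟨v, hv, rfl⟩

/-- The arrow maps of the global tensor functor, induced by the `V_a`. -/
def rkfMap (a : Q₁) : rkfSpace tl hd Vx Va (tl a) →ₗ[K] rkfSpace tl hd Vx Va (hd a) :=
  Submodule.liftQ _
    ((rkfDen tl hd Vx Va (hd a)).mkQ ∘ₗ (Va a).restrict (gd_mapsTo tl hd Vx Va a))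
    (by
      intro v hv
      simp only [LinearMap.mem_ker, LinearMap.comp_apply, Submodule.mkQ_apply,
        Submodule.Quotient.mk_eq_zero]
      have hv' : (v : Vx (tl a)) ∈ Delta tl hd Vx Va (tl a) := hv
      show (Va a) (v : Vx (tl a)) ∈ Delta tl hd Vx Va (hd a)
      exact delta_subrep tl hd Vx Va a ⟨(v : Vx (tl a)), hv', rfl⟩)

/-- Isomorphism of quiver representations. -/
def RepIso (Wx : Q₀ → Type) [∀ x, AddCommGroup (Wx x)] [∀ x, Module K (Wx x)]
    (Wa : ∀ a : Q₁, Wx (tl a) →ₗ[K] Wx (hd a)) : Prop :=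
  ∃ φ : ∀ x, Vx x ≃ₗ[K] Wx x, ∀ (a : Q₁) (v : Vx (tl a)), φ (hd a) (Va a v) = Wa a (φ (tl a) v)

end Defs

lemma comap_dualAnnihilator_aux {K V W : Type} [Field K] [AddCommGroup V] [Module K V]
    [AddCommGroup W] [Module K W] (f : V →ₗ[K] W) (N : Submodule K W) :
    (N.comap f).dualAnnihilator = N.dualAnnihilator.map f.dualMap := by
  have h1 : N.comap f = LinearMap.ker (N.mkQ ∘ₗ f) := by
    rw [LinearMap.ker_comp, Submodule.ker_mkQ]
  rw [h1, ← LinearMap.range_dualMap_eq_dualAnnihilator_ker, ← LinearMap.dualMap_comp_dualMap,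
    LinearMap.range_comp, Submodule.range_dualMap_mkQ_eq]

/-- for the dual representation `DV` of the opposite quiver,
`Γ_{Qᵒᵖ}(DV)_x` is the annihilator of `Δ_Q(V)_x`. -/
theorem stmt_1 {K : Type} [Field K] {Q₀ Q₁ : Type} [Fintype Q₀] [Fintype Q₁]
    (tl hd : Q₁ → Q₀)
    (Vx : Q₀ → Type) [∀ x, AddCommGroup (Vx x)] [∀ x, Module K (Vx x)]
    [∀ x, FiniteDimensional K (Vx x)]
    (Va : ∀ a : Q₁, Vx (tl a) →ₗ[K] Vx (hd a)) :
    ∀ x : Q₀,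
      Gamma hd tl (fun y => Module.Dual K (Vx y)) (fun a => (Va a).dualMap) x
        = (Delta tl hd Vx Va x).dualAnnihilator := by
  intro x
  apply le_antisymm
  · refine iSup_le fun U => ?_
    have hU : ∀ y, (U.1 y).dualCoannihilator.dualAnnihilator = U.1 y := fun y =>
      Subspace.dualCoannihilator_dualAnnihilator_eq
    have key : ∀ a : Q₁, ((U.1 (hd a)).dualCoannihilator).comap (Va a)
        = (U.1 (tl a)).dualCoannihilator := by
      intro a
      rw [← Subspace.dualAnnihilator_inj, comap_dualAnnihilator_aux, hU, hU]
      exact U.2 a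
    have hN : IsCoclosedSub tl hd Vx Va (fun y => (U.1 y).dualCoannihilator) :=
      ⟨fun a => Submodule.map_le_iff_le_comap.2 (key a).ge, fun a => (key a).le⟩
    have h := Submodule.dualAnnihilator_anti (delta_le tl hd Vx Va hN x)
    rwa [hU] at h
  · refine le_gamma hd tl (fun y => Module.Dual K (Vx y)) (fun a => (Va a).dualMap)
      (U := fun y => (Delta tl hd Vx Va y).dualAnnihilator) ?_ x
    intro a
    show (Delta tl hd Vx Va (hd a)).dualAnnihilator.map (Va a).dualMap
      = (Delta tl hd Vx Va (tl a)).dualAnnihilator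
    rw [← comap_dualAnnihilator_aux]
    congr 1
    apply le_antisymm
    · refine le_iInf fun N => ?_
      exact (Submodule.comap_mono (delta_le tl hd Vx Va N.2 (hd a))).trans (N.2.2 a)
    · exact Submodule.map_le_iff_le_comap.1 (delta_subrep tl hd Vx Va a)
end

section
/- Let V, W be representations of a quiver Q over a field K and let V⊕W be their pointwise direct sum. Then for every vertex x, Γ(V⊕W)_x = Γ(V)_x × Γ(W)_x and Δ(V⊕W)_x = Δ(V)_x × Δ(W)_x; consequently the global tensor functor is additive: rkf(V⊕W) is isomorphic to rkf(V) ⊕ rkf(W) as representations of Q. -/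
open Submodule

section Helpers

variable {K : Type} [Field K]
variable {Q₀ Q₁ : Type} (tl hd : Q₁ → Q₀)
variable (Vx : Q₀ → Type) [∀ x, AddCommGroup (Vx x)] [∀ x, Module K (Vx x)]
variable (Va : ∀ a : Q₁, Vx (tl a) →ₗ[K] Vx (hd a))
variable (Wx : Q₀ → Type) [∀ x, AddCommGroup (Wx x)] [∀ x, Module K (Wx x)]
variable (Wa : ∀ a : Q₁, Wx (tl a) →ₗ[K] Wx (hd a))

lemma delta_coclosed : IsCoclosedSub tl hd Vx Va (Delta tl hd Vx Va) := by
  refine ⟨delta_subrep tl hd Vx Va, fun a v hv => ?_⟩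
  have hv' : Va a v ∈ Delta tl hd Vx Va (hd a) := hv
  rw [Delta, Submodule.mem_iInf] at hv' ⊢
  exact fun N => N.2.2 a (hv' N)

lemma gamma_prod (x : Q₀) :
    Gamma tl hd (fun y => Vx y × Wx y) (fun a => (Va a).prodMap (Wa a)) x
        = (Gamma tl hd Vx Va x).prod (Gamma tl hd Wx Wa x) := by
  apply le_antisymm
  · refine iSup_le fun U => ?_
    have h1 : IsEpiSub tl hd Vx Va (fun y => (U.1 y).map (LinearMap.fst K (Vx y) (Wx y))) := by
      intro a
      simp only
      rw [← U.2 a, ← Submodule.map_comp, ← Submodule.map_comp]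
      rfl
    have h2 : IsEpiSub tl hd Wx Wa (fun y => (U.1 y).map (LinearMap.snd K (Vx y) (Wx y))) := by
      intro a
      simp only
      rw [← U.2 a, ← Submodule.map_comp, ← Submodule.map_comp]
      rfl
    intro v hv
    exact ⟨le_gamma tl hd Vx Va h1 x ⟨v, hv, rfl⟩, le_gamma tl hd Wx Wa h2 x ⟨v, hv, rfl⟩⟩
  · refine le_gamma tl hd (fun y => Vx y × Wx y) (fun a => (Va a).prodMap (Wa a))
      (U := fun y => (Gamma tl hd Vx Va y).prod (Gamma tl hd Wx Wa y)) (fun a => ?_) x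
    simp only
    rw [← gamma_epi tl hd Vx Va a, ← gamma_epi tl hd Wx Wa a]
    ext ⟨p, q⟩
    constructor
    · rintro ⟨⟨v, w⟩, ⟨hv, hw⟩, h⟩
      cases h
      exact ⟨⟨v, hv, rfl⟩, ⟨w, hw, rfl⟩⟩
    · rintro ⟨⟨v, hv, h⟩, ⟨w, hw, h'⟩⟩
      exact ⟨(v, w), ⟨hv, hw⟩, Prod.ext h h'⟩

lemma delta_prod (x : Q₀) :
    Delta tl hd (fun y => Vx y × Wx y) (fun a => (Va a).prodMap (Wa a)) x
        = (Delta tl hd Vx Va x).prod (Delta tl hd Wx Wa x) := by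
  have hV := delta_coclosed tl hd Vx Va
  have hW := delta_coclosed tl hd Wx Wa
  apply le_antisymm
  · refine delta_le tl hd (fun y => Vx y × Wx y) (fun a => (Va a).prodMap (Wa a))
      (N := fun y => (Delta tl hd Vx Va y).prod (Delta tl hd Wx Wa y)) ⟨fun a => ?_, fun a => ?_⟩ x
    · rintro _ ⟨⟨v, w⟩, ⟨hv, hw⟩, rfl⟩
      exact ⟨hV.1 a ⟨v, hv, rfl⟩, hW.1 a ⟨w, hw, rfl⟩⟩
    · rintro ⟨v, w⟩ ⟨hv, hw⟩
      exact ⟨hV.2 a hv, hW.2 a hw⟩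
  · refine le_iInf fun N => ?_
    have h1 : IsCoclosedSub tl hd Vx Va
        (fun y => (N.1 y).comap (LinearMap.inl K (Vx y) (Wx y))) := by
      refine ⟨fun a => ?_, fun a v hv => ?_⟩
      · rintro _ ⟨v, hv, rfl⟩
        have := N.2.1 a ⟨_, hv, rfl⟩
        simpa using this
      · refine N.2.2 a ?_
        simpa using hv
    have h2 : IsCoclosedSub tl hd Wx Wa
        (fun y => (N.1 y).comap (LinearMap.inr K (Vx y) (Wx y))) := by
      refine ⟨fun a => ?_, fun a v hv => ?_⟩
      · rintro _ ⟨v, hv, rfl⟩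
        have := N.2.1 a ⟨_, hv, rfl⟩
        simpa using this
      · refine N.2.2 a ?_
        simpa using hv
    rintro ⟨v, w⟩ ⟨hv, hw⟩
    have e1 : ((v, 0) : Vx x × Wx x) ∈ N.1 x := delta_le tl hd Vx Va h1 x hv
    have e2 : ((0, w) : Vx x × Wx x) ∈ N.1 x := delta_le tl hd Wx Wa h2 x hw
    have := add_mem e1 e2
    simpa using this

lemma gd_prod (x : Q₀) :
    GD tl hd (fun y => Vx y × Wx y) (fun a => (Va a).prodMap (Wa a)) x
        = (GD tl hd Vx Va x).prod (GD tl hd Wx Wa x) := by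
  rw [GD, gamma_prod, delta_prod, Submodule.prod_sup_prod]

/-- The comparison map before passing to the quotient. -/
def preComparison (x : Q₀) :
    GD tl hd (fun y => Vx y × Wx y) (fun a => (Va a).prodMap (Wa a)) x →ₗ[K]
      rkfSpace tl hd Vx Va x × rkfSpace tl hd Wx Wa x :=
  LinearMap.prod
    ((rkfDen tl hd Vx Va x).mkQ ∘ₗ (LinearMap.fst K (Vx x) (Wx x)).restrict
      (fun _ hv => ((gd_prod tl hd Vx Va Wx Wa x).le hv).1))
    ((rkfDen tl hd Wx Wa x).mkQ ∘ₗ (LinearMap.snd K (Vx x) (Wx x)).restrict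
      (fun _ hv => ((gd_prod tl hd Vx Va Wx Wa x).le hv).2))

lemma preComparison_ker (x : Q₀) :
    LinearMap.ker (preComparison tl hd Vx Va Wx Wa x) =
      rkfDen tl hd (fun y => Vx y × Wx y) (fun a => (Va a).prodMap (Wa a)) x := by
  ext v
  have h : v ∈ rkfDen tl hd (fun y => Vx y × Wx y) (fun a => (Va a).prodMap (Wa a)) x ↔
      v.1 ∈ (Delta tl hd Vx Va x).prod (Delta tl hd Wx Wa x) := by
    rw [← delta_prod]
    rfl
  rw [h, LinearMap.mem_ker]
  refine Prod.ext_iff.trans (and_congr ?_ ?_)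
  · exact Submodule.Quotient.mk_eq_zero _
  · exact Submodule.Quotient.mk_eq_zero _

lemma preComparison_surjective (x : Q₀) :
    Function.Surjective (preComparison tl hd Vx Va Wx Wa x) := by
  rintro ⟨p, q⟩
  obtain ⟨v, rfl⟩ := Submodule.Quotient.mk_surjective _ p
  obtain ⟨w, rfl⟩ := Submodule.Quotient.mk_surjective _ q
  exact ⟨⟨(v.1, w.1), (gd_prod tl hd Vx Va Wx Wa x).ge ⟨v.2, w.2⟩⟩, rfl⟩

/-- The isomorphism of vertex spaces. -/
noncomputable def comparison (x : Q₀) :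
    rkfSpace tl hd (fun y => Vx y × Wx y) (fun a => (Va a).prodMap (Wa a)) x ≃ₗ[K]
      rkfSpace tl hd Vx Va x × rkfSpace tl hd Wx Wa x :=
  (Submodule.quotEquivOfEq _ _ (preComparison_ker tl hd Vx Va Wx Wa x).symm).trans
    ((preComparison tl hd Vx Va Wx Wa x).quotKerEquivOfSurjective
      (preComparison_surjective tl hd Vx Va Wx Wa x))

end Helpers

/-- `Γ` and `Δ` of a direct sum are the products of `Γ`'s and `Δ`'s,
and the global tensor functor is additive: `rkf(V ⊕ W) ≅ rkf(V) ⊕ rkf(W)`. -/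
theorem stmt_2 {K : Type} [Field K] {Q₀ Q₁ : Type} [Fintype Q₀] [Fintype Q₁]
    (tl hd : Q₁ → Q₀)
    (Vx : Q₀ → Type) [∀ x, AddCommGroup (Vx x)] [∀ x, Module K (Vx x)]
    [∀ x, FiniteDimensional K (Vx x)]
    (Va : ∀ a : Q₁, Vx (tl a) →ₗ[K] Vx (hd a))
    (Wx : Q₀ → Type) [∀ x, AddCommGroup (Wx x)] [∀ x, Module K (Wx x)]
    [∀ x, FiniteDimensional K (Wx x)]
    (Wa : ∀ a : Q₁, Wx (tl a) →ₗ[K] Wx (hd a)) :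
    (∀ x : Q₀, Gamma tl hd (fun y => Vx y × Wx y) (fun a => (Va a).prodMap (Wa a)) x
        = (Gamma tl hd Vx Va x).prod (Gamma tl hd Wx Wa x)) ∧
    (∀ x : Q₀, Delta tl hd (fun y => Vx y × Wx y) (fun a => (Va a).prodMap (Wa a)) x
        = (Delta tl hd Vx Va x).prod (Delta tl hd Wx Wa x)) ∧
    (∃ φ : ∀ x : Q₀,
        rkfSpace tl hd (fun y => Vx y × Wx y) (fun a => (Va a).prodMap (Wa a)) x ≃ₗ[K]
          rkfSpace tl hd Vx Va x × rkfSpace tl hd Wx Wa x,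
      ∀ (a : Q₁) (v : rkfSpace tl hd (fun y => Vx y × Wx y) (fun a => (Va a).prodMap (Wa a)) (tl a)),
        φ (hd a) (rkfMap tl hd (fun y => Vx y × Wx y) (fun a => (Va a).prodMap (Wa a)) a v)
          = ((rkfMap tl hd Vx Va a).prodMap (rkfMap tl hd Wx Wa a)) (φ (tl a) v)) := by
  refine ⟨gamma_prod tl hd Vx Va Wx Wa, delta_prod tl hd Vx Va Wx Wa,
    comparison tl hd Vx Va Wx Wa, fun a v => ?_⟩
  obtain ⟨v, rfl⟩ := Submodule.Quotient.mk_surjective _ v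
  rfl
end

section
/- Let V be a representation of a quiver Q over a field K. Then for every arrow a of Q, the induced linear map (rkf V)_a : (rkf V)_{ta} → (rkf V)_{ha} is a bijection. That is, rkf(V) is both epimorphic and monomorphic. -/
open Submodule

/-- for every arrow `a`, the induced map `(rkf V)_a` is a bijection,
i.e. `rkf(V)` is both epimorphic and monomorphic. -/
theorem stmt_3 {K : Type} [Field K] {Q₀ Q₁ : Type} [Fintype Q₀] [Fintype Q₁]
    (tl hd : Q₁ → Q₀)
    (Vx : Q₀ → Type) [∀ x, AddCommGroup (Vx x)] [∀ x, Module K (Vx x)]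
    [∀ x, FiniteDimensional K (Vx x)]
    (Va : ∀ a : Q₁, Vx (tl a) →ₗ[K] Vx (hd a)) :
    ∀ a : Q₁, Function.Bijective (rkfMap tl hd Vx Va a) := by
  intro a
  constructor
  · rw [← LinearMap.ker_eq_bot, LinearMap.ker_eq_bot']
    intro m hm
    obtain ⟨v, rfl⟩ := Submodule.mkQ_surjective _ m
    have h1 : (rkfDen tl hd Vx Va (hd a)).mkQ
        ((Va a).restrict (gd_mapsTo tl hd Vx Va a) v) = 0 := hm
    rw [Submodule.mkQ_apply, Submodule.Quotient.mk_eq_zero] at h1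
    have h2 : Va a (v : Vx (tl a)) ∈ Delta tl hd Vx Va (hd a) := h1
    rw [Submodule.mkQ_apply, Submodule.Quotient.mk_eq_zero]
    change (v : Vx (tl a)) ∈ Delta tl hd Vx Va (tl a)
    refine (Submodule.mem_iInf _).2 fun N => ?_
    exact N.2.2 a (delta_le tl hd Vx Va N.2 (hd a) h2)
  · intro m
    obtain ⟨⟨w, hw⟩, rfl⟩ := Submodule.mkQ_surjective _ m
    obtain ⟨g, hg, d, hd', rfl⟩ := Submodule.mem_sup.1 hw
    rw [← gamma_epi tl hd Vx Va a] at hg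
    obtain ⟨u, hu, rfl⟩ := hg
    refine ⟨(rkfDen tl hd Vx Va (tl a)).mkQ ⟨u, Submodule.mem_sup_left hu⟩, ?_⟩
    change (rkfDen tl hd Vx Va (hd a)).mkQ
        ((Va a).restrict (gd_mapsTo tl hd Vx Va a) ⟨u, Submodule.mem_sup_left hu⟩) = _
    rw [Submodule.mkQ_apply, Submodule.mkQ_apply, Submodule.Quotient.eq]
    change Va a u - (Va a u + d) ∈ Delta tl hd Vx Va (hd a)
    simpa using hd'
end

section
/- Let Q be a connected quiver and V a representation of Q over a field K. Then the dimension dim_K (rkf V)_x is the same for all vertices x of Q. -/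
open Submodule

lemma delta_coclosed_aux {K : Type} [Field K] {Q₀ Q₁ : Type} (tl hd : Q₁ → Q₀)
    (Vx : Q₀ → Type) [∀ x, AddCommGroup (Vx x)] [∀ x, Module K (Vx x)]
    (Va : ∀ a : Q₁, Vx (tl a) →ₗ[K] Vx (hd a)) (a : Q₁) (v : Vx (tl a))
    (hv : Va a v ∈ Delta tl hd Vx Va (hd a)) : v ∈ Delta tl hd Vx Va (tl a) := by
  rw [Delta, Submodule.mem_iInf]
  intro N
  exact N.2.2 a (delta_le tl hd Vx Va N.2 (hd a) hv)

lemma rkfMap_bij_aux {K : Type} [Field K] {Q₀ Q₁ : Type} (tl hd : Q₁ → Q₀)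
    (Vx : Q₀ → Type) [∀ x, AddCommGroup (Vx x)] [∀ x, Module K (Vx x)]
    (Va : ∀ a : Q₁, Vx (tl a) →ₗ[K] Vx (hd a)) (a : Q₁) :
    Function.Bijective (rkfMap tl hd Vx Va a) := by
  constructor
  · rw [injective_iff_map_eq_zero]
    intro q
    obtain ⟨v, rfl⟩ := Submodule.Quotient.mk_surjective _ q
    intro h
    have h' := (Submodule.Quotient.mk_eq_zero (rkfDen tl hd Vx Va (hd a))
      (x := (Va a).restrict (gd_mapsTo tl hd Vx Va a) v)).1 h
    rw [Submodule.Quotient.mk_eq_zero]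
    exact delta_coclosed_aux tl hd Vx Va a v.1 h'
  · intro q
    obtain ⟨⟨w, hw⟩, rfl⟩ := Submodule.Quotient.mk_surjective _ q
    obtain ⟨g, hg, d, hd', hgd⟩ := Submodule.mem_sup.1 hw
    have hg2 := hg
    rw [← gamma_epi tl hd Vx Va a] at hg2
    obtain ⟨u, hu, hug⟩ := hg2
    refine ⟨Submodule.Quotient.mk ⟨u, Submodule.mem_sup_left hu⟩, ?_⟩
    refine (Submodule.Quotient.eq (rkfDen tl hd Vx Va (hd a))).2 ?_
    show Va a u - w ∈ Delta tl hd Vx Va (hd a)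
    have : Va a u - w = -d := by
      rw [← hgd, ← hug]
      abel
    rw [this]
    exact Submodule.neg_mem _ hd'

/-- if `Q` is connected, then `dim_K (rkf V)_x` is independent of the vertex `x`. -/
theorem stmt_4 {K : Type} [Field K] {Q₀ Q₁ : Type} [Fintype Q₀] [Fintype Q₁]
    (tl hd : Q₁ → Q₀)
    (hconn : ∀ x y : Q₀, Relation.ReflTransGen
      (fun u v => ∃ a : Q₁, (tl a = u ∧ hd a = v) ∨ (hd a = u ∧ tl a = v)) x y)
    (Vx : Q₀ → Type) [∀ x, AddCommGroup (Vx x)] [∀ x, Module K (Vx x)]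
    [∀ x, FiniteDimensional K (Vx x)]
    (Va : ∀ a : Q₁, Vx (tl a) →ₗ[K] Vx (hd a)) :
    ∀ x y : Q₀, Module.finrank K (rkfSpace tl hd Vx Va x)
      = Module.finrank K (rkfSpace tl hd Vx Va y) := by
  intro x y
  induction hconn x y with
  | refl => rfl
  | tail _ h ih =>
    rw [ih]
    have key : ∀ a : Q₁, Module.finrank K (rkfSpace tl hd Vx Va (tl a))
        = Module.finrank K (rkfSpace tl hd Vx Va (hd a)) := fun a =>
      (LinearEquiv.ofBijective _ (rkfMap_bij_aux tl hd Vx Va a)).finrank_eq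
    obtain ⟨a, ⟨rfl, rfl⟩ | ⟨rfl, rfl⟩⟩ := h
    · exact key a
    · exact (key a).symm
end

section
/- Let V, W be representations of a quiver Q over a field K and let V⊗W be their pointwise tensor product. Then for every vertex x, the image of Γ(V)_x ⊗ Γ(W)_x under the canonical inclusion into V_x ⊗ W_x is contained in Γ(V⊗W)_x; that is, the tensor product of the maximal epimorphic subrepresentations is an epimorphic subrepresentation of V⊗W and hence contained in Γ(V⊗W). -/
open Submodule

/-- the (image of the) tensor product `Γ(V) ⊗ Γ(W)` is an epimorphic
subrepresentation of `V ⊗ W`, hence contained in `Γ(V ⊗ W)`. -/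
theorem stmt_5 {K : Type} [Field K] {Q₀ Q₁ : Type} [Fintype Q₀] [Fintype Q₁]
    (tl hd : Q₁ → Q₀)
    (Vx : Q₀ → Type) [∀ x, AddCommGroup (Vx x)] [∀ x, Module K (Vx x)]
    [∀ x, FiniteDimensional K (Vx x)]
    (Va : ∀ a : Q₁, Vx (tl a) →ₗ[K] Vx (hd a))
    (Wx : Q₀ → Type) [∀ x, AddCommGroup (Wx x)] [∀ x, Module K (Wx x)]
    [∀ x, FiniteDimensional K (Wx x)]
    (Wa : ∀ a : Q₁, Wx (tl a) →ₗ[K] Wx (hd a)) :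
    IsEpiSub tl hd (fun y => TensorProduct K (Vx y) (Wx y))
        (fun a => TensorProduct.map (Va a) (Wa a))
        (fun x => LinearMap.range
          (TensorProduct.mapIncl (Gamma tl hd Vx Va x) (Gamma tl hd Wx Wa x))) ∧
    ∀ x : Q₀,
      LinearMap.range (TensorProduct.mapIncl (Gamma tl hd Vx Va x) (Gamma tl hd Wx Wa x))
        ≤ Gamma tl hd (fun y => TensorProduct K (Vx y) (Wx y))
            (fun a => TensorProduct.map (Va a) (Wa a)) x := by
  have key : IsEpiSub tl hd (fun y => TensorProduct K (Vx y) (Wx y))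
        (fun a => TensorProduct.map (Va a) (Wa a))
        (fun x => LinearMap.range
          (TensorProduct.mapIncl (Gamma tl hd Vx Va x) (Gamma tl hd Wx Wa x))) := by
    intro a
    show Submodule.map (TensorProduct.map (Va a) (Wa a))
      (LinearMap.range (TensorProduct.mapIncl (Gamma tl hd Vx Va (tl a))
        (Gamma tl hd Wx Wa (tl a)))) = LinearMap.range (TensorProduct.mapIncl
        (Gamma tl hd Vx Va (hd a)) (Gamma tl hd Wx Wa (hd a)))
    rw [TensorProduct.mapIncl, ← LinearMap.range_comp, ← TensorProduct.map_comp,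
      TensorProduct.range_map, TensorProduct.range_mapIncl, LinearMap.range_comp,
      LinearMap.range_comp, Submodule.range_subtype, Submodule.range_subtype,
      gamma_epi tl hd Vx Va a, gamma_epi tl hd Wx Wa a]
  exact ⟨key, fun x => le_gamma tl hd (fun y => TensorProduct K (Vx y) (Wx y))
    (fun a => TensorProduct.map (Va a) (Wa a)) key x⟩
end

section
/- Let Q be the Kronecker quiver with two vertices 1, 2 and two arrows a, b, both from 1 to 2. Let V be the representation with V_1 = V_2 = K, V_a = id_K, V_b = 0, and let W be the representation with W_1 = W_2 = K, W_a = 0, W_b = id_K. Then Γ(V) = 0 and Γ(W) = 0, but Γ(V⊗W) ≠ 0; in fact Γ(V⊗W)_1 = V_1 ⊗ W_1 ≅ K and Γ(V⊗W)_2 = 0. Hence the canonical inclusion Γ(V)⊗Γ(W) ⊆ Γ(V⊗W) is not an isomorphism in general. -/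
open Submodule

/-- on the Kronecker quiver (two arrows `false`, `true` from vertex `false`
to vertex `true`), the representations `V = (id, 0)` and `W = (0, id)` have `Γ(V) = 0`,
`Γ(W) = 0`, but `Γ(V ⊗ W)` is nonzero: it is everything at the source and `0` at the sink. -/
theorem stmt_6 {K : Type} [Field K] :
    (∀ x : Bool, Gamma (K := K) (fun _ : Bool => false) (fun _ => true) (fun _ => K)
        (fun a : Bool => if a then 0 else LinearMap.id) x = ⊥) ∧
    (∀ x : Bool, Gamma (K := K) (fun _ : Bool => false) (fun _ => true) (fun _ => K)
        (fun a : Bool => if a then LinearMap.id else 0) x = ⊥) ∧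
    (Gamma (K := K) (fun _ : Bool => false) (fun _ => true) (fun _ => TensorProduct K K K)
        (fun a : Bool => TensorProduct.map (if a then 0 else LinearMap.id)
          (if a then LinearMap.id else 0)) false = ⊤) ∧
    (Gamma (K := K) (fun _ : Bool => false) (fun _ => true) (fun _ => TensorProduct K K K)
        (fun a : Bool => TensorProduct.map (if a then 0 else LinearMap.id)
          (if a then LinearMap.id else 0)) true = ⊥) ∧
    ¬ (∀ x : Bool, Gamma (K := K) (fun _ : Bool => false) (fun _ => true)
        (fun _ => TensorProduct K K K)
        (fun a : Bool => TensorProduct.map (if a then 0 else LinearMap.id)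
          (if a then LinearMap.id else 0)) x = ⊥) := by
  have h3 : Gamma (K := K) (fun _ : Bool => false) (fun _ => true)
        (fun _ => TensorProduct K K K)
        (fun a : Bool => TensorProduct.map (if a then 0 else LinearMap.id)
          (if a then LinearMap.id else 0)) false = ⊤ := by
    refine top_le_iff.mp ?_
    have hU : IsEpiSub (K := K) (fun _ : Bool => false) (fun _ => true)
        (fun _ => TensorProduct K K K)
        (fun a : Bool => TensorProduct.map (if a then 0 else LinearMap.id)
          (if a then LinearMap.id else 0)) (fun x => if x then ⊥ else ⊤) := by
      intro a
      cases a <;> simp [TensorProduct.map_zero_left, TensorProduct.map_zero_right]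
    exact le_gamma _ _ _ _ hU false
  refine ⟨?_, ?_, h3, ?_, ?_⟩
  · have h := gamma_epi (K := K) (fun _ : Bool => false) (fun _ => true) (fun _ => K)
        (fun a : Bool => if a then 0 else LinearMap.id)
    have ht := h true
    have hf := h false
    simp only [if_true, Submodule.map_zero] at ht
    simp only [Bool.false_eq_true, if_false, Submodule.map_id] at hf
    intro x
    cases x
    · exact hf.trans ht.symm
    · exact ht.symm
  · have h := gamma_epi (K := K) (fun _ : Bool => false) (fun _ => true) (fun _ => K)
        (fun a : Bool => if a then LinearMap.id else 0)
    have ht := h true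
    have hf := h false
    simp only [if_true, Submodule.map_id] at ht
    simp only [Bool.false_eq_true, if_false, Submodule.map_zero] at hf
    intro x
    cases x
    · exact ht.trans hf.symm
    · exact hf.symm
  · have h := gamma_epi (K := K) (fun _ : Bool => false) (fun _ => true)
        (fun _ => TensorProduct K K K)
        (fun a : Bool => TensorProduct.map (if a then 0 else LinearMap.id)
          (if a then LinearMap.id else 0)) true
    simp only [if_true, TensorProduct.map_zero_left, Submodule.map_zero] at h
    exact h.symm
  · intro h
    have h0 := (h false).symm.trans h3
    have h1 : TensorProduct.tmul K (1 : K) (1 : K) ∈ (⊥ : Submodule K (TensorProduct K K K)) := by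
      rw [h0]; trivial
    have h2 := congrArg (TensorProduct.lid K K) ((Submodule.mem_bot K).mp h1)
    simp at h2
end

section
/- Let V, W be representations of a quiver Q over a field K. Then for every vertex x, Γ(V⊗W)_x ⊆ Γ(V)_x ⊗ W_x + V_x ⊗ Δ(W)_x as subspaces of V_x ⊗ W_x (where Γ(V)_x ⊗ W_x and V_x ⊗ Δ(W)_x denote the images of the canonical inclusions). Equivalently, the composition Γ(V⊗W) ↪ V⊗W ↠ V ⊗ (W/Δ(W)) has image contained in Γ(V) ⊗ (W/Δ(W)). -/
open Submodule

section Helpers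

open TensorProduct

/-- Contraction of the right tensor factor with a functional. -/
noncomputable def contractR {K A B : Type} [Field K] [AddCommGroup A] [Module K A]
    [AddCommGroup B] [Module K B] (f : B →ₗ[K] K) : A ⊗[K] B →ₗ[K] A :=
  (TensorProduct.rid K A).toLinearMap ∘ₗ f.lTensor A

lemma contractR_map {K A B A' B' : Type} [Field K] [AddCommGroup A] [Module K A]
    [AddCommGroup B] [Module K B] [AddCommGroup A'] [Module K A']
    [AddCommGroup B'] [Module K B'] (p : A →ₗ[K] A') (q : B →ₗ[K] B') (g : B' →ₗ[K] K)
    (u : A ⊗[K] B) :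
    contractR g (TensorProduct.map p q u) = p (contractR (g ∘ₗ q) u) := by
  induction u with
  | zero => simp
  | tmul a b => simp [contractR]
  | add x y hx hy => simp only [map_add, hx, hy]

lemma contractR_zero {K A B : Type} [Field K] [AddCommGroup A] [Module K A]
    [AddCommGroup B] [Module K B] (u : A ⊗[K] B)
    (h : ∀ f : B →ₗ[K] K, contractR f u = 0) : u = 0 := by
  classical
  let b := Module.Basis.ofVectorSpace K B
  apply (TensorProduct.equivFinsuppOfBasisRight (M := A) b).injective
  rw [map_zero]
  ext i
  rw [TensorProduct.equivFinsuppOfBasisRight_apply]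
  exact h (b.coord i)

lemma mem_sup_of_contractR {K A B : Type} [Field K] [AddCommGroup A] [Module K A]
    [AddCommGroup B] [Module K B] (G : Submodule K A) (D : Submodule K B) (u : A ⊗[K] B)
    (h : ∀ f : B →ₗ[K] K, D ≤ LinearMap.ker f → contractR f u ∈ G) :
    u ∈ LinearMap.range (TensorProduct.map G.subtype (LinearMap.id : B →ₗ[K] B))
      ⊔ LinearMap.range (TensorProduct.map (LinearMap.id : A →ₗ[K] A) D.subtype) := by
  have key := TensorProduct.map_ker (f := G.subtype) (g := G.mkQ) (f' := D.subtype) (g' := D.mkQ)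
    (LinearMap.exact_subtype_mkQ G) (Submodule.mkQ_surjective _)
    (LinearMap.exact_subtype_mkQ D) (Submodule.mkQ_surjective _)
  rw [sup_comm]
  change u ∈ LinearMap.range (LinearMap.lTensor A D.subtype) ⊔
    LinearMap.range (LinearMap.rTensor B G.subtype)
  rw [← key, LinearMap.mem_ker]
  apply contractR_zero
  intro f
  rw [contractR_map, Submodule.mkQ_apply, Submodule.Quotient.mk_eq_zero]
  apply h
  intro d hd
  simp [(Submodule.Quotient.mk_eq_zero D).2 hd]

lemma delta_coclosed_s7 {K : Type} [Field K] {Q₀ Q₁ : Type} (tl hd : Q₁ → Q₀)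
    (Wx : Q₀ → Type) [∀ x, AddCommGroup (Wx x)] [∀ x, Module K (Wx x)]
    (Wa : ∀ a : Q₁, Wx (tl a) →ₗ[K] Wx (hd a)) (a : Q₁) :
    (Delta tl hd Wx Wa (hd a)).comap (Wa a) ≤ Delta tl hd Wx Wa (tl a) :=
  le_iInf fun N => le_trans
    (Submodule.comap_mono (delta_le tl hd Wx Wa N.2 (hd a))) (N.2.2 a)

lemma exists_factor {K B C : Type} [Field K] [AddCommGroup B] [Module K B]
    [AddCommGroup C] [Module K C] (q : B →ₗ[K] C) (D : Submodule K B) (E : Submodule K C)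
    (hE : E.comap q ≤ D) (f : B →ₗ[K] K) (hf : D ≤ LinearMap.ker f) :
    ∃ g : C →ₗ[K] K, E ≤ LinearMap.ker g ∧ g ∘ₗ q = f := by
  have h1 : f ∈ (LinearMap.ker (E.mkQ ∘ₗ q)).dualAnnihilator := by
    rw [Submodule.mem_dualAnnihilator]
    intro w hw
    apply hf
    apply hE
    simpa using hw
  rw [← LinearMap.range_dualMap_eq_dualAnnihilator_ker] at h1
  obtain ⟨g, hg⟩ := h1
  refine ⟨g ∘ₗ E.mkQ, ?_, hg⟩
  intro e he
  simp [(Submodule.Quotient.mk_eq_zero E).2 he]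

end Helpers

/-- `Γ(V⊗W)_x ⊆ Γ(V)_x ⊗ W_x + V_x ⊗ Δ(W)_x` inside `V_x ⊗ W_x`,
where the two summands are the images of the canonical inclusions. -/
theorem stmt_7 {K : Type} [Field K] {Q₀ Q₁ : Type} [Fintype Q₀] [Fintype Q₁]
    (tl hd : Q₁ → Q₀)
    (Vx : Q₀ → Type) [∀ x, AddCommGroup (Vx x)] [∀ x, Module K (Vx x)]
    [∀ x, FiniteDimensional K (Vx x)]
    (Va : ∀ a : Q₁, Vx (tl a) →ₗ[K] Vx (hd a))
    (Wx : Q₀ → Type) [∀ x, AddCommGroup (Wx x)] [∀ x, Module K (Wx x)]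
    [∀ x, FiniteDimensional K (Wx x)]
    (Wa : ∀ a : Q₁, Wx (tl a) →ₗ[K] Wx (hd a)) :
    ∀ x : Q₀,
      Gamma tl hd (fun y => TensorProduct K (Vx y) (Wx y))
          (fun a => TensorProduct.map (Va a) (Wa a)) x
        ≤ LinearMap.range (TensorProduct.map (Gamma tl hd Vx Va x).subtype
            (LinearMap.id : Wx x →ₗ[K] Wx x))
          ⊔ LinearMap.range (TensorProduct.map (LinearMap.id : Vx x →ₗ[K] Vx x)
            (Delta tl hd Wx Wa x).subtype) := by
  let T := Gamma tl hd (fun y => TensorProduct K (Vx y) (Wx y))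
          (fun a => TensorProduct.map (Va a) (Wa a))
  have hT : IsEpiSub tl hd (fun y => TensorProduct K (Vx y) (Wx y))
          (fun a => TensorProduct.map (Va a) (Wa a)) T := gamma_epi _ _ _ _
  let S : ∀ y, Submodule K (Vx y) := fun y =>
    Submodule.span K {v | ∃ f : Wx y →ₗ[K] K, Delta tl hd Wx Wa y ≤ LinearMap.ker f ∧
      ∃ u ∈ T y, contractR f u = v}
  have hS : IsEpiSub tl hd Vx Va S := by
    intro a
    apply le_antisymm
    · rw [Submodule.map_le_iff_le_comap]
      refine Submodule.span_le.2 ?_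
      rintro _ ⟨f, hf, u, hu, rfl⟩
      obtain ⟨g, hg, rfl⟩ := exists_factor (Wa a) _ _ (delta_coclosed_s7 tl hd Wx Wa a) f hf
      refine Submodule.subset_span ⟨g, hg, TensorProduct.map (Va a) (Wa a) u, ?_, ?_⟩
      · rw [← hT a]
        exact ⟨u, hu, rfl⟩
      · exact contractR_map _ _ _ _
    · refine Submodule.span_le.2 ?_
      rintro _ ⟨g, hg, u, hu, rfl⟩
      rw [← hT a] at hu
      obtain ⟨w, hw, rfl⟩ := hu
      refine ⟨contractR (g ∘ₗ Wa a) w, Submodule.subset_span ⟨_, ?_, w, hw, rfl⟩, ?_⟩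
      · intro d hd'
        exact hg (delta_subrep tl hd Wx Wa a ⟨d, hd', rfl⟩)
      · exact (contractR_map _ _ _ _).symm
  intro x u hu
  apply mem_sup_of_contractR
  intro f hf
  exact le_gamma tl hd Vx Va hS x (Submodule.subset_span ⟨f, hf, u, hu, rfl⟩)
end
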